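/- If a labeled polytree sequent R, Γ is derivable in the labeled calculus G3Kt, then the nested sequent 𝔑(R, Γ) is derivable in the shallow nested calculus SKT. -/

import Mathlib

/-! A derivation in `G3Kt` is turned into one in `SKT` by induction, reading every labeled sequent
that occurs in it as a nested sequent. Two facts carry the argument.

* `NTree.reroot`: the choice of root is irrelevant. Moving the root across one edge of the polytree
  is one application of a display rule (rf) or (rp), so if a nested sequent `X` translates a
  polytree and `u` is a vertex of it, then some translation rooted at `u` derives `X`.
* `NTree.split_formula` and `NTree.split_edge`: in a translation rooted at `u`, every formula at `u`
  and every subtree hanging from `u` stands, up to associativity and commutativity of comma, at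
  the top level of the nested sequent.

Hence, for a rule of `G3Kt` with principal formula at `u`, one reroots at `u`, exposes the principal
formula (and for `◇`, `◆` the edge used), translates the premises at the same root, applies the
rule of `SKT` of the same name to the translations given by the induction hypothesis, and returns
to the original root by display rules. Conclusions and premises are translated for arbitrary roots
and arbitrary representatives, which is what makes the induction go through; the polytree property
is then implicit in the existence of a translation.
-/

set_option autoImplicit false

/-! # Common definitions: tense logics, nested/labeled/display calculi
    (following Ciabattoni, Lyon, Ramanayake, Tiu,
     "Display to Labeled Proofs and Back Again for Tense Logics") -/

/-- Diamonds: `wd` = ◇ (white diamond), `bd` = ◆ (black diamond). -/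
inductive Dmd : Type
  | wd
  | bd
deriving DecidableEq, Repr

/-- Tense formulae in negation normal form:
    `A ::= p | p̄ | A ∧ A | A ∨ A | □A | ◇A | ■A | ◆A`. -/
inductive Formula : Type
  | pos : Nat → Formula      -- propositional variable p
  | neg : Nat → Formula      -- negated propositional variable p̄
  | and : Formula → Formula → Formula
  | or : Formula → Formula → Formula
  | box : Formula → Formula   -- □
  | dia : Formula → Formula   -- ◇
  | bbox : Formula → Formula  -- ■
  | bdia : Formula → Formula  -- ◆
deriving DecidableEq, Repr

/-- The De Morgan dual `Ā` of a formula `A`. -/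
def Formula.dual : Formula → Formula
  | .pos p => .neg p
  | .neg p => .pos p
  | .and A B => .or A.dual B.dual
  | .or A B => .and A.dual B.dual
  | .box A => .dia A.dual
  | .dia A => .box A.dual
  | .bbox A => .bdia A.dual
  | .bdia A => .bbox A.dual

/-- `A → B` is defined as `Ā ∨ B`. -/
def Formula.imp (A B : Formula) : Formula := A.dual.or B

/-- `A ↔ B` is defined as `(A → B) ∧ (B → A)`. -/
def Formula.iffF (A B : Formula) : Formula := (A.imp B).and (B.imp A)

/-- `⟨?⟩A` for a diamond `⟨?⟩ ∈ {◇, ◆}`. -/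
def dmdF : Dmd → Formula → Formula
  | .wd, A => .dia A
  | .bd, A => .bdia A

/-- `⟨?⟩₁…⟨?⟩ₘ A` for a string of diamonds. -/
def applyDmds : List Dmd → Formula → Formula
  | [], A => A
  | d :: ds, A => dmdF d (applyDmds ds A)

/-- A general path axiom `ΠA → ΣA`, given by the strings `Π` (ant) and `Σ` (suc). -/
structure GenPath : Type where
  ant : List Dmd
  suc : List Dmd

/-- A path axiom `ΠA → ⟨?⟩A`. -/
structure PathAx : Type where
  ant : List Dmd
  suc : Dmd
deriving DecidableEq

/-- Every path axiom is a general path axiom. -/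
def pathToGen (F : PathAx) : GenPath := ⟨F.ant, [F.suc]⟩

/-- All instances `ΠA → ΣA` of the general path axioms in `GP`. -/
def gpInstances (GP : Set GenPath) : Set Formula :=
  {F | ∃ gp ∈ GP, ∃ A : Formula, F = (applyDmds gp.ant A).imp (applyDmds gp.suc A)}

/-- The Hilbert system `Kt + S`: classical propositional axioms, modus ponens,
    the tense axioms, and necessitation for □ and ■, plus the axioms in `S`. -/
inductive KtProof (S : Set Formula) : Formula → Prop
  | ax {A : Formula} : A ∈ S → KtProof S A
  | pl1 (A B : Formula) : KtProof S (A.imp (B.imp A))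
  | pl2 (A B : Formula) : KtProof S ((B.dual.imp A.dual).imp (A.imp B))
  | pl3 (A B C : Formula) :
      KtProof S ((A.imp (B.imp C)).imp ((A.imp B).imp (A.imp C)))
  | tense1 (A : Formula) : KtProof S (A.imp (Formula.box (Formula.bdia A)))
  | tense2 (A : Formula) : KtProof S (A.imp (Formula.bbox (Formula.dia A)))
  | kbox (A B : Formula) :
      KtProof S ((Formula.box (A.imp B)).imp ((Formula.box A).imp (Formula.box B)))
  | kbbox (A B : Formula) :
      KtProof S ((Formula.bbox (A.imp B)).imp ((Formula.bbox A).imp (Formula.bbox B)))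
  | boxdual (A : Formula) :
      KtProof S ((Formula.box A).iffF (Formula.dia A.dual).dual)
  | bboxdual (A : Formula) :
      KtProof S ((Formula.bbox A).iffF (Formula.bdia A.dual).dual)
  | mp {A B : Formula} : KtProof S (A.imp B) → KtProof S A → KtProof S B
  | necbox {A : Formula} : KtProof S A → KtProof S (Formula.box A)
  | necbbox {A : Formula} : KtProof S A → KtProof S (Formula.bbox A)

/-! ## Nested sequents -/

/-- Nested sequents: `X ::= ε | A | X, X | ∘{X} | •{X}`. -/
inductive NSeq : Type
  | empty
  | fml : Formula → NSeq
  | comma : NSeq → NSeq → NSeq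
  | white : NSeq → NSeq   -- ∘{X}
  | black : NSeq → NSeq   -- •{X}
deriving DecidableEq, Repr

/-- Comma is associative and commutative with unit ε: the induced congruence. -/
inductive NEquiv : NSeq → NSeq → Prop
  | refl (X : NSeq) : NEquiv X X
  | symm {X Y : NSeq} : NEquiv X Y → NEquiv Y X
  | trans {X Y Z : NSeq} : NEquiv X Y → NEquiv Y Z → NEquiv X Z
  | comm (X Y : NSeq) : NEquiv (X.comma Y) (Y.comma X)
  | assoc (X Y Z : NSeq) : NEquiv ((X.comma Y).comma Z) (X.comma (Y.comma Z))
  | unit (X : NSeq) : NEquiv (X.comma NSeq.empty) X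
  | commaCongr {X X' Y Y' : NSeq} :
      NEquiv X X' → NEquiv Y Y' → NEquiv (X.comma Y) (X'.comma Y')
  | whiteCongr {X Y : NSeq} : NEquiv X Y → NEquiv X.white Y.white
  | blackCongr {X Y : NSeq} : NEquiv X Y → NEquiv X.black Y.black

/-- `★₁{… ★ₙ{Y} …}` where `★ⱼ = ∘` if `⟨?⟩ⱼ = ◇` and `★ⱼ = •` if `⟨?⟩ⱼ = ◆`. -/
def nestDmds : List Dmd → NSeq → NSeq
  | [], Y => Y
  | .wd :: ds, Y => (nestDmds ds Y).white
  | .bd :: ds, Y => (nestDmds ds Y).black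

/-- The structural rules `NestSt(GP)` (premise, conclusion): for each
    `ΠA → ΣA ∈ GP`, from `X, ★Σ{Y}` infer `X, ★Π{Y}`. -/
def NestSt (GP : Set GenPath) : NSeq → NSeq → Prop :=
  fun prem concl => ∃ gp ∈ GP, ∃ X Y : NSeq,
    prem = X.comma (nestDmds gp.suc Y) ∧ concl = X.comma (nestDmds gp.ant Y)

/-- The empty set of extension rules on nested sequents. -/
def NoNest : NSeq → NSeq → Prop := fun _ _ => False

/-- The shallow nested (display) calculus `SKT` extended with the
    structural rules `Ext` (relating premise to conclusion); nested sequents are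
    treated up to the congruence `NEquiv` (comma is AC with unit ε). -/
inductive SKT (Ext : NSeq → NSeq → Prop) : NSeq → Prop
  | id (X : NSeq) (p : Nat) :
      SKT Ext ((X.comma (.fml (.pos p))).comma (.fml (.neg p)))
  | orR {X : NSeq} {A B : Formula} :
      SKT Ext (X.comma ((NSeq.fml A).comma (.fml B))) →
      SKT Ext (X.comma (.fml (.or A B)))
  | andR {X : NSeq} {A B : Formula} :
      SKT Ext (X.comma (.fml A)) → SKT Ext (X.comma (.fml B)) →
      SKT Ext (X.comma (.fml (.and A B)))
  | ctr {X Y : NSeq} : SKT Ext (X.comma (Y.comma Y)) → SKT Ext (X.comma Y)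
  | wk {X Y : NSeq} : SKT Ext X → SKT Ext (X.comma Y)
  | rf {X Y : NSeq} : SKT Ext (X.comma Y.white) → SKT Ext (X.black.comma Y)
  | rp {X Y : NSeq} : SKT Ext (X.comma Y.black) → SKT Ext (X.white.comma Y)
  | bbox {X : NSeq} {A : Formula} :
      SKT Ext (X.comma (NSeq.fml A).black) → SKT Ext (X.comma (.fml (.bbox A)))
  | box {X : NSeq} {A : Formula} :
      SKT Ext (X.comma (NSeq.fml A).white) → SKT Ext (X.comma (.fml (.box A)))
  | bdia {X Y : NSeq} {A : Formula} :
      SKT Ext ((X.comma (Y.comma (.fml A)).black).comma (.fml (.bdia A))) →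
      SKT Ext ((X.comma Y.black).comma (.fml (.bdia A)))
  | dia {X Y : NSeq} {A : Formula} :
      SKT Ext ((X.comma (Y.comma (.fml A)).white).comma (.fml (.dia A))) →
      SKT Ext ((X.comma Y.white).comma (.fml (.dia A)))
  | ext {X Y : NSeq} : Ext X Y → SKT Ext X → SKT Ext Y
  | equiv {X Y : NSeq} : SKT Ext X → NEquiv X Y → SKT Ext Y

/-! ## Deep nested calculus -/

/-- One-hole contexts over nested sequents (up to `NEquiv` this suffices). -/
inductive Ctx : Type
  | hole
  | commaL : Ctx → NSeq → Ctx
  | white : Ctx → Ctx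
  | black : Ctx → Ctx

/-- Filling the hole of a context with a nested sequent. -/
def Ctx.fill : Ctx → NSeq → NSeq
  | .hole, X => X
  | .commaL C Y, X => (C.fill X).comma Y
  | .white C, X => (C.fill X).white
  | .black C, X => (C.fill X).black

/-- The deep nested calculus `DKT` extended with rules `Ext`
    (premise, conclusion); sequents are treated up to `NEquiv`. -/
inductive DKT (Ext : NSeq → NSeq → Prop) : NSeq → Prop
  | id (C : Ctx) (p : Nat) :
      DKT Ext (C.fill ((NSeq.fml (.pos p)).comma (.fml (.neg p))))
  | andD {C : Ctx} {Y : NSeq} {A B : Formula} :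
      DKT Ext (C.fill ((NSeq.fml A).comma Y)) →
      DKT Ext (C.fill ((NSeq.fml B).comma Y)) →
      DKT Ext (C.fill ((NSeq.fml (.and A B)).comma Y))
  | orD {C : Ctx} {Y : NSeq} {A B : Formula} :
      DKT Ext (C.fill ((NSeq.fml A).comma ((NSeq.fml B).comma Y))) →
      DKT Ext (C.fill ((NSeq.fml (.or A B)).comma Y))
  | bboxD {C : Ctx} {A : Formula} :
      DKT Ext (C.fill ((NSeq.fml (.bbox A)).comma (NSeq.fml A).black)) →
      DKT Ext (C.fill (.fml (.bbox A)))
  | boxD {C : Ctx} {A : Formula} :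
      DKT Ext (C.fill ((NSeq.fml (.box A)).comma (NSeq.fml A).white)) →
      DKT Ext (C.fill (.fml (.box A)))
  | bdia1 {C : Ctx} {Y : NSeq} {A : Formula} :
      DKT Ext (C.fill ((Y.comma (.fml A)).black.comma (.fml (.bdia A)))) →
      DKT Ext (C.fill (Y.black.comma (.fml (.bdia A))))
  | bdia2 {C : Ctx} {Y : NSeq} {A : Formula} :
      DKT Ext (C.fill ((Y.comma (.fml (.bdia A))).white.comma (.fml A))) →
      DKT Ext (C.fill ((Y.comma (.fml (.bdia A))).white))
  | dia1 {C : Ctx} {Y : NSeq} {A : Formula} :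
      DKT Ext (C.fill ((Y.comma (.fml A)).white.comma (.fml (.dia A)))) →
      DKT Ext (C.fill (Y.white.comma (.fml (.dia A))))
  | dia2 {C : Ctx} {Y : NSeq} {A : Formula} :
      DKT Ext (C.fill ((Y.comma (.fml (.dia A))).black.comma (.fml A))) →
      DKT Ext (C.fill ((Y.comma (.fml (.dia A))).black))
  | ext {X Y : NSeq} : Ext X Y → DKT Ext X → DKT Ext Y
  | equiv {X Y : NSeq} : DKT Ext X → NEquiv X Y → DKT Ext Y

/-! ## Display rules and display equivalence -/

/-- `DisplayDeriv X Z`: `Z` is derivable from `X` using only the display rules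
    (rf) and (rp) (and rearrangement by the comma-congruence `NEquiv`). -/
inductive DisplayDeriv : NSeq → NSeq → Prop
  | refl (X : NSeq) : DisplayDeriv X X
  | equiv {X Y Z : NSeq} : NEquiv X Y → DisplayDeriv Y Z → DisplayDeriv X Z
  | rf {X Y Z : NSeq} :
      DisplayDeriv (X.black.comma Y) Z → DisplayDeriv (X.comma Y.white) Z
  | rp {X Y Z : NSeq} :
      DisplayDeriv (X.white.comma Y) Z → DisplayDeriv (X.comma Y.black) Z

/-- Two nested sequents are display equivalent when each is derivable from the
    other using only the display rules. -/
def DisplayEquiv (X Y : NSeq) : Prop := DisplayDeriv X Y ∧ DisplayDeriv Y X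

/-! ## Labeled sequents and the labeled calculus G3Kt -/

abbrev Label : Type := Nat

/-- A set of relational atoms `Rxy`. -/
abbrev RelSet : Type := Finset (Label × Label)

/-- A labeled sequent `R, Γ`. -/
abbrev LSeq : Type := RelSet × Multiset (Label × Formula)

/-- The label `z` occurs in the labeled sequent `S`. -/
def occursLS (z : Label) (S : LSeq) : Prop :=
  (∃ w, (z, w) ∈ S.1 ∨ (w, z) ∈ S.1) ∨ ∃ A, (z, A) ∈ S.2

/-- `R_◇ x y := Rxy` and `R_◆ x y := Ryx`. -/
def relAtom : Dmd → Label → Label → Label × Label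
  | .wd, x, y => (x, y)
  | .bd, x, y => (y, x)

/-- Relational atoms of a `Π`-chain through the list of labels `ls`. -/
def chainAtoms : List Dmd → List Label → List (Label × Label)
  | d :: ds, a :: b :: rest => relAtom d a b :: chainAtoms ds (b :: rest)
  | _, _ => []

/-- `ls` is a chain of labels for the diamond string `ds` from `x` to `y`
    (an empty string forces `x = y`). -/
def IsChainList (ds : List Dmd) (x y : Label) (ls : List Label) : Prop :=
  ls.length = ds.length + 1 ∧ ls.head? = some x ∧ ls.getLast? = some y

/-- The structural rules `LabSt(GP)` (premise, conclusion): for `ΠA → ΣA ∈ GP`,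
    from `R, R_Π x y, R_Σ x y, Γ` infer `R, R_Π x y, Γ`, where all labels in
    `R_Σ x y` other than `x, y` are eigenvariables. -/
def LabSt (GP : Set GenPath) : LSeq → LSeq → Prop :=
  fun prem concl => ∃ gp ∈ GP,
    ∃ (R : RelSet) (Γ : Multiset (Label × Formula)) (x y : Label)
      (als sls : List Label),
      IsChainList gp.ant x y als ∧ IsChainList gp.suc x y sls ∧
      concl = (R ∪ (chainAtoms gp.ant als).toFinset, Γ) ∧
      prem = (R ∪ (chainAtoms gp.ant als).toFinset ∪
                (chainAtoms gp.suc sls).toFinset, Γ) ∧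
      (∀ z ∈ sls, z ≠ x → z ≠ y → ¬ occursLS z concl)

/-- The empty set of extension rules on labeled sequents. -/
def NoExt : LSeq → LSeq → Prop := fun _ _ => False

/-- Derivations in the labeled calculus `G3Kt` extended with rules `Ext`
    (relating premise to conclusion). -/
inductive G3KtD (Ext : LSeq → LSeq → Prop) :
    RelSet → Multiset (Label × Formula) → Type
  | id (R : RelSet) (Γ : Multiset (Label × Formula)) (x : Label) (p : Nat) :
      G3KtD Ext R ((x, .pos p) ::ₘ (x, .neg p) ::ₘ Γ)
  | orR (R : RelSet) (Γ : Multiset (Label × Formula)) (x : Label) (A B : Formula)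
      (D : G3KtD Ext R ((x, A) ::ₘ (x, B) ::ₘ Γ)) :
      G3KtD Ext R ((x, .or A B) ::ₘ Γ)
  | andR (R : RelSet) (Γ : Multiset (Label × Formula)) (x : Label) (A B : Formula)
      (D1 : G3KtD Ext R ((x, A) ::ₘ Γ)) (D2 : G3KtD Ext R ((x, B) ::ₘ Γ)) :
      G3KtD Ext R ((x, .and A B) ::ₘ Γ)
  | boxR (R : RelSet) (Γ : Multiset (Label × Formula)) (x y : Label) (A : Formula)
      (hy : ¬ occursLS y (R, (x, Formula.box A) ::ₘ Γ))
      (D : G3KtD Ext (insert (x, y) R) ((y, A) ::ₘ Γ)) :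
      G3KtD Ext R ((x, .box A) ::ₘ Γ)
  | diaR (R : RelSet) (Γ : Multiset (Label × Formula)) (x y : Label) (A : Formula)
      (h : (x, y) ∈ R)
      (D : G3KtD Ext R ((y, A) ::ₘ (x, Formula.dia A) ::ₘ Γ)) :
      G3KtD Ext R ((x, .dia A) ::ₘ Γ)
  | bboxR (R : RelSet) (Γ : Multiset (Label × Formula)) (x y : Label) (A : Formula)
      (hy : ¬ occursLS y (R, (x, Formula.bbox A) ::ₘ Γ))
      (D : G3KtD Ext (insert (y, x) R) ((y, A) ::ₘ Γ)) :
      G3KtD Ext R ((x, .bbox A) ::ₘ Γ)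
  | bdiaR (R : RelSet) (Γ : Multiset (Label × Formula)) (x y : Label) (A : Formula)
      (h : (y, x) ∈ R)
      (D : G3KtD Ext R ((y, A) ::ₘ (x, Formula.bdia A) ::ₘ Γ)) :
      G3KtD Ext R ((x, .bdia A) ::ₘ Γ)
  | ext (R' : RelSet) (Γ' : Multiset (Label × Formula))
      (R : RelSet) (Γ : Multiset (Label × Formula))
      (h : Ext (R', Γ') (R, Γ)) (D : G3KtD Ext R' Γ') : G3KtD Ext R Γ

/-- Derivability in `G3Kt + Ext`. -/
def G3KtDeriv (Ext : LSeq → LSeq → Prop) (R : RelSet)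
    (Γ : Multiset (Label × Formula)) : Prop :=
  Nonempty (G3KtD Ext R Γ)

/-- `Q` holds of every labeled sequent occurring in the derivation `D`
    (including the end sequent). -/
def G3KtD.allSeq {Ext : LSeq → LSeq → Prop} (Q : LSeq → Prop) :
    ∀ {R : RelSet} {Γ : Multiset (Label × Formula)}, G3KtD Ext R Γ → Prop
  | _, _, .id R Γ x p => Q (R, (x, .pos p) ::ₘ (x, .neg p) ::ₘ Γ)
  | _, _, .orR R Γ x A B D => Q (R, (x, .or A B) ::ₘ Γ) ∧ D.allSeq Q
  | _, _, .andR R Γ x A B D1 D2 =>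
      Q (R, (x, .and A B) ::ₘ Γ) ∧ D1.allSeq Q ∧ D2.allSeq Q
  | _, _, .boxR R Γ x _ A _ D => Q (R, (x, .box A) ::ₘ Γ) ∧ D.allSeq Q
  | _, _, .diaR R Γ x _ A _ D => Q (R, (x, .dia A) ::ₘ Γ) ∧ D.allSeq Q
  | _, _, .bboxR R Γ x _ A _ D => Q (R, (x, .bbox A) ::ₘ Γ) ∧ D.allSeq Q
  | _, _, .bdiaR R Γ x _ A _ D => Q (R, (x, .bdia A) ::ₘ Γ) ∧ D.allSeq Q
  | _, _, .ext _ _ R Γ _ D => Q (R, Γ) ∧ D.allSeq Q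

/-! ## Paths, inverses, compositions, completion, propagation rules -/

/-- The inverse of a diamond: `◇⁻¹ = ◆` and `◆⁻¹ = ◇`. -/
def Dmd.inv : Dmd → Dmd
  | .wd => .bd
  | .bd => .wd

/-- The inverse `I(F)` of a path axiom `F`. -/
def PathAx.inv (F : PathAx) : PathAx := ⟨(F.ant.map Dmd.inv).reverse, F.suc.inv⟩

/-- `I(P)`, the set of inverses of the path axioms in `P`. -/
def invSet (P : Set PathAx) : Set PathAx := {F | ∃ G ∈ P, F = G.inv}

/-- The completion `P*`: the smallest set of path axioms containing `P`,
    containing `◇A → ◇A` and `◆A → ◆A`, and closed under compositions. -/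
inductive Completion (P : Set PathAx) : PathAx → Prop
  | base {F : PathAx} : F ∈ P → Completion P F
  | wrefl : Completion P ⟨[Dmd.wd], Dmd.wd⟩
  | brefl : Completion P ⟨[Dmd.bd], Dmd.bd⟩
  | comp {F G : PathAx} (i : Nat) (hi : i < G.ant.length) :
      Completion P F → Completion P G → G.ant.get ⟨i, hi⟩ = F.suc →
      Completion P ⟨G.ant.take i ++ F.ant ++ G.ant.drop (i + 1), G.suc⟩

/-- `(P ∪ I(P))*`. -/
def PStar (P : Set PathAx) : PathAx → Prop := Completion (P ∪ invSet P)

/-- A path from `x` to `y` with the given string of diamonds in the propagation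
    graph determined by the edge set `E`: each `Rxy` contributes the labeled
    edges `(x, y, ◇)` and `(y, x, ◆)`. -/
inductive LPath (E : Finset (Label × Label)) : Label → Label → List Dmd → Prop
  | nil (x : Label) : LPath E x x []
  | fwd {x z y : Label} {ds : List Dmd} :
      (x, z) ∈ E → LPath E z y ds → LPath E x y (Dmd.wd :: ds)
  | bwd {x z y : Label} {ds : List Dmd} :
      (z, x) ∈ E → LPath E z y ds → LPath E x y (Dmd.bd :: ds)

/-- The labeled propagation rules `LabPr(P)` (premise, conclusion):
    from `R, x:⟨?⟩A, y:A, Γ` infer `R, x:⟨?⟩A, Γ`, provided there is a path `π`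
    from `x` to `y` in the propagation graph of the premise whose string `Π`
    satisfies `ΠA → ⟨?⟩A ∈ (P ∪ I(P))*`. -/
def LabPr (P : Set PathAx) : LSeq → LSeq → Prop :=
  fun prem concl =>
    ∃ (R : RelSet) (Γ : Multiset (Label × Formula)) (x y : Label)
      (A : Formula) (d : Dmd) (Pi : List Dmd),
      prem = (R, (x, dmdF d A) ::ₘ (y, A) ::ₘ Γ) ∧
      concl = (R, (x, dmdF d A) ::ₘ Γ) ∧
      LPath R x y Pi ∧ PStar P ⟨Pi, d⟩

/-! ## Labeled graphs, labeled polytrees, and the translations 𝔏 and 𝔑 -/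

/-- A labeled graph `(V, E, L)`: vertices decorated with multisets of formulae. -/
structure LGraph : Type where
  V : Finset Label
  E : Finset (Label × Label)
  L : Label → Multiset Formula

/-- Union of labeled graphs (multiset union of labels at shared vertices). -/
def LGraph.union (G H : LGraph) : LGraph :=
  ⟨G.V ∪ H.V, G.E ∪ H.E, fun z => G.L z + H.L z⟩

/-- Isomorphism of labeled graphs: a bijection between the vertex sets
    preserving edges and vertex labels. -/
def LGraph.Iso (G H : LGraph) : Prop :=
  ∃ f : Label → Label, Set.BijOn f ↑G.V ↑H.V ∧
    (∀ u ∈ G.V, ∀ v ∈ G.V, ((u, v) ∈ G.E ↔ (f u, f v) ∈ H.E)) ∧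
    (∀ v ∈ G.V, G.L v = H.L (f v))

/-- A labeled graph is a labeled polytree when its underlying undirected
    graph is a tree. -/
def LGraph.IsPolytree (G : LGraph) : Prop :=
  (∀ x y : Label, (x, y) ∈ G.E → (y, x) ∉ G.E) ∧
  (∀ e ∈ G.E, e.1 ∈ G.V ∧ e.2 ∈ G.V) ∧
  ((SimpleGraph.fromRel fun a b => (a, b) ∈ G.E).induce (↑G.V : Set Label)).IsTree

/-- The translation `𝔏ₓ` from nested sequents to labeled graphs (relational,
    since fresh vertices may be chosen arbitrarily): `LabT x X G` states that
    `G` is a labeled graph obtained by translating `X` starting at vertex `x`. -/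
inductive LabT : Label → NSeq → LGraph → Prop
  | empty (x : Label) : LabT x .empty ⟨∅, ∅, fun _ => 0⟩
  | fml (x : Label) (A : Formula) :
      LabT x (.fml A) ⟨{x}, ∅, fun z => if z = x then {A} else 0⟩
  | comma {x : Label} {X Y : NSeq} {G H : LGraph} :
      LabT x X G → LabT x Y H → G.V ∩ H.V ⊆ {x} →
      LabT x (X.comma Y) (G.union H)
  | white {x y : Label} {X : NSeq} {G : LGraph} :
      LabT y X G → x ∉ G.V → x ≠ y →
      LabT x X.white ⟨insert x (insert y G.V), insert (x, y) G.E, G.L⟩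
  | black {x y : Label} {X : NSeq} {G : LGraph} :
      LabT y X G → x ∉ G.V → x ≠ y →
      LabT x X.black ⟨insert x (insert y G.V), insert (y, x) G.E, G.L⟩

/-- The translation `𝔑ₓ` from labeled polytrees (rooted at a chosen vertex `x`)
    to nested sequents: the inverse of the translation `𝔏ₓ`. -/
def NTrans (x : Label) (G : LGraph) (X : NSeq) : Prop := LabT x X G

/-- The labeled graph of a labeled sequent `R, Γ`: vertices are the occurring
    labels, edges are given by `R`, and each vertex `x` is labeled by the
    multiset `{A | x:A ∈ Γ}`. -/
def toLGraph (R : RelSet) (Γ : Multiset (Label × Formula)) : LGraph where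
  V := R.image Prod.fst ∪ R.image Prod.snd ∪ (Γ.map Prod.fst).toFinset
  E := R
  L := fun z => (Γ.filter fun p => p.1 = z).map Prod.snd

/-- The multiset of labeled formulae of a labeled graph, read as a sequent. -/
def LGraph.toSeqGamma (G : LGraph) : Multiset (Label × Formula) :=
  G.V.val.bind fun v => (G.L v).map fun A => (v, A)

/-- The set of labels occurring in a labeled sequent. -/
def seqLabels (R : RelSet) (Γ : Multiset (Label × Formula)) : Set Label :=
  {z | (∃ w, (z, w) ∈ R ∨ (w, z) ∈ R) ∨ ∃ A, (z, A) ∈ Γ}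

/-- `R, Γ` is a labeled polytree sequent: its underlying undirected graph
    (on the occurring labels) is a tree. -/
def IsPolytreeSeq (R : RelSet) (Γ : Multiset (Label × Formula)) : Prop :=
  (∀ x y : Label, (x, y) ∈ R → (y, x) ∉ R) ∧
  ((SimpleGraph.fromRel fun a b => (a, b) ∈ R).induce (seqLabels R Γ)).IsTree

/-- The labeled edges `(u, v, ◇)` and `(v, u, ◆)` of the propagation graph
    determined by an edge set. -/
def propEdges (E : Finset (Label × Label)) : Set (Label × Label × Dmd) :=
  {e | ∃ u v : Label, (u, v) ∈ E ∧ (e = (u, v, Dmd.wd) ∨ e = (v, u, Dmd.bd))}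

/-- The deep propagation rules `DeepPr(P)` (premise, conclusion), expressed via
    the labeled polytree representation of nested sequents: from
    `X[⟨?⟩A]ᵢ[A]ⱼ` infer `X[⟨?⟩A]ᵢ[∅]ⱼ`, provided there is a path from node `i`
    (= `u`) to node `j` (= `v`) in the propagation graph of the premise whose
    string `Π` satisfies `ΠA → ⟨?⟩A ∈ (P ∪ I(P))*`. -/
def DeepPrL (P : Set PathAx) : NSeq → NSeq → Prop :=
  fun prem concl =>
    ∃ (r : Label) (G : LGraph) (u v : Label) (A : Formula) (d : Dmd)
      (Pi : List Dmd),
      LabT r prem G ∧ LPath G.E u v Pi ∧ PStar P ⟨Pi, d⟩ ∧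
      dmdF d A ∈ G.L u ∧ A ∈ G.L v ∧
      LabT r concl ⟨G.V, G.E, fun z => if z = v then (G.L v).erase A else G.L z⟩

/-- Substitution of the label `y` by the label `x`. -/
def subLabel (x y z : Label) : Label := if z = y then x else z

/-! ### Nested sequents modulo the comma congruence -/

/-- The setoid of the comma congruence. -/
def nseqSetoid : Setoid NSeq := ⟨NEquiv, .refl, .symm, .trans⟩

/-- Nested sequents modulo the comma congruence. Comma makes them a commutative monoid, so that
instances of `NEquiv` can be proved by `abel`. -/
def QSeq : Type := Quotient nseqSetoid

/-- The class of a nested sequent. -/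
def qmk (X : NSeq) : QSeq := Quotient.mk nseqSetoid X

theorem qmk_eq {X Y : NSeq} : qmk X = qmk Y ↔ NEquiv X Y :=
  ⟨fun h => Quotient.exact h, fun h => Quotient.sound h⟩

instance : Add QSeq :=
  ⟨Quotient.map₂ NSeq.comma fun _ _ h _ _ h' => NEquiv.commaCongr h h'⟩

instance : Zero QSeq := ⟨qmk .empty⟩

theorem qmk_comma (X Y : NSeq) : qmk (X.comma Y) = qmk X + qmk Y := rfl

theorem qmk_empty : qmk .empty = 0 := rfl

theorem qadd_comm (a b : QSeq) : a + b = b + a := by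
  induction a using Quotient.inductionOn
  induction b using Quotient.inductionOn
  exact qmk_eq.2 (.comm _ _)

theorem qadd_zero (a : QSeq) : a + 0 = a := by
  induction a using Quotient.inductionOn
  exact qmk_eq.2 (.unit _)

instance : AddCommMonoid QSeq where
  add_assoc a b c := by
    induction a using Quotient.inductionOn
    induction b using Quotient.inductionOn
    induction c using Quotient.inductionOn
    exact qmk_eq.2 (.assoc _ _ _)
  zero_add a := by rw [qadd_comm, qadd_zero]
  add_zero := qadd_zero
  add_comm := qadd_comm
  nsmul := nsmulRec

theorem SKT.of_qmk {Ext : NSeq → NSeq → Prop} {X Y : NSeq} (h : SKT Ext X)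
    (e : qmk X = qmk Y) : SKT Ext Y :=
  h.equiv (qmk_eq.1 e)

/-! ### Translations of labeled sequents -/

/-- `∘{X}` or `•{X}`, according to the diamond. -/
def nestD : Dmd → NSeq → NSeq
  | .wd, X => X.white
  | .bd, X => X.black

/-- `□A` or `■A`, according to the diamond. -/
def boxD : Dmd → Formula → Formula
  | .wd, A => .box A
  | .bd, A => .bbox A

/-- `NTree x X V E Γ`: the nested sequent `X` is a translation, with root `x`, of the labeled
polytree with vertex set `V`, edges `E` and labeled formulae `Γ`. This is `LabT` with the vertex
labeling presented as a multiset of labeled formulae. As for `LabT`, the root belongs to `V` only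
when `V` is nonempty. -/
inductive NTree : Label → NSeq → Set Label → RelSet → Multiset (Label × Formula) → Prop
  | empty (x : Label) : NTree x .empty ∅ ∅ 0
  | fml (x : Label) (A : Formula) : NTree x (.fml A) {x} ∅ {(x, A)}
  | comma {x : Label} {X Y : NSeq} {V V' : Set Label} {E E' : RelSet}
      {Γ Γ' : Multiset (Label × Formula)} :
      NTree x X V E Γ → NTree x Y V' E' Γ' → (∀ z ∈ V, z ∈ V' → z = x) →
      NTree x (X.comma Y) (V ∪ V') (E ∪ E') (Γ + Γ')
  | nest (d : Dmd) {x y : Label} {X : NSeq} {V : Set Label} {E : RelSet}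
      {Γ : Multiset (Label × Formula)} :
      NTree y X V E Γ → x ∉ V → x ≠ y →
      NTree x (nestD d X) (insert x (insert y V)) (insert (relAtom d x y) E) Γ

theorem NTree.cast {x : Label} {X : NSeq} {V V' : Set Label} {E E' : RelSet}
    {Γ Γ' : Multiset (Label × Formula)} (h : NTree x X V E Γ) (hV : V = V') (hE : E = E')
    (hΓ : Γ = Γ') : NTree x X V' E' Γ' := by
  subst hV hE hΓ; exact h

/-- The labeling of `Γ` as a function on labels. -/
def labelsAt (Γ : Multiset (Label × Formula)) (z : Label) : Multiset Formula :=
  (Γ.filter fun p => p.1 = z).map Prod.snd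

theorem count_labelsAt (Γ : Multiset (Label × Formula)) (z : Label) (A : Formula) :
    (labelsAt Γ z).count A = Γ.count (z, A) := by
  induction Γ using Multiset.induction_on with
  | empty => simp [labelsAt]
  | cons p Γ ih =>
    obtain ⟨w, B⟩ := p
    unfold labelsAt at ih ⊢
    by_cases h : w = z
    · subst h
      by_cases hB : A = B
      · subst hB; simp [ih]
      · simp [ih, hB]
    · have : z ≠ w := fun e => h e.symm
      simp [ih, h, this]

theorem labelsAt_injective {Γ Γ' : Multiset (Label × Formula)}
    (h : ∀ z, labelsAt Γ z = labelsAt Γ' z) : Γ = Γ' := by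
  ext ⟨z, A⟩
  rw [← count_labelsAt, ← count_labelsAt, h]

theorem LabT.tree {x : Label} {X : NSeq} {G : LGraph} (h : LabT x X G) :
    ∃ Γ, NTree x X (↑G.V) G.E Γ ∧ ∀ z, G.L z = labelsAt Γ z := by
  induction h with
  | empty x => exact ⟨0, (NTree.empty x).cast (by simp) rfl rfl, fun z => by simp [labelsAt]⟩
  | fml x A =>
    refine ⟨{(x, A)}, (NTree.fml x A).cast (by simp) rfl rfl, fun z => ?_⟩
    by_cases hz : z = x
    · subst hz; simp [labelsAt, Multiset.filter_singleton]
    · have : x ≠ z := fun e => hz e.symm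
      simp [labelsAt, Multiset.filter_singleton, hz, this]
  | comma _ _ hV ih ih' =>
    obtain ⟨Γ, h, hL⟩ := ih
    obtain ⟨Γ', h', hL'⟩ := ih'
    refine ⟨Γ + Γ', (h.comma h' fun z hz hz' => ?_).cast (by simp [LGraph.union]) rfl rfl,
      fun z => ?_⟩
    · exact Finset.mem_singleton.1 (hV (Finset.mem_inter.2 ⟨hz, hz'⟩))
    · simp [LGraph.union, hL, hL', labelsAt]
  | white _ hx hxy ih =>
    obtain ⟨Γ, h, hL⟩ := ih
    exact ⟨Γ, (h.nest .wd (by simpa using hx) hxy).cast (by simp) rfl rfl, hL⟩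
  | black _ hx hxy ih =>
    obtain ⟨Γ, h, hL⟩ := ih
    exact ⟨Γ, (h.nest .bd (by simpa using hx) hxy).cast (by simp) rfl rfl, hL⟩

section

variable {x : Label} {X : NSeq} {V : Set Label} {E : RelSet} {Γ : Multiset (Label × Formula)}

theorem NTree.mem_of_fml (h : NTree x X V E Γ) : ∀ p ∈ Γ, p.1 ∈ V := by
  induction h with
  | empty x => simp
  | fml x A => simp
  | comma _ _ _ ih ih' =>
    intro p hp
    exact (Multiset.mem_add.1 hp).imp (ih p) (ih' p)
  | nest d _ _ _ ih => exact fun p hp => .inr (.inr (ih p hp))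

theorem NTree.mem_of_edge (h : NTree x X V E Γ) : ∀ e ∈ E, e.1 ∈ V ∧ e.2 ∈ V := by
  induction h with
  | empty x => simp
  | fml x A => simp
  | comma _ _ _ ih ih' =>
    intro e he
    rcases Finset.mem_union.1 he with he | he
    · exact ⟨.inl (ih e he).1, .inl (ih e he).2⟩
    · exact ⟨.inr (ih' e he).1, .inr (ih' e he).2⟩
  | nest d _ _ _ ih =>
    intro e he
    rcases Finset.mem_insert.1 he with rfl | he
    · cases d <;> simp [relAtom]
    · exact ⟨.inr (.inr (ih e he).1), .inr (.inr (ih e he).2)⟩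

/-- Every vertex of a translated polytree occurs in the sequent, so that eigenvariables are fresh
for the polytree. -/
theorem NTree.occurs (h : NTree x X V E Γ) : ∀ z ∈ V, occursLS z (E, Γ) := by
  induction h with
  | empty x => simp
  | fml x A => rintro z rfl; exact .inr ⟨A, by simp⟩
  | comma _ _ _ ih ih' =>
    rintro z (hz | hz)
    · rcases ih z hz with ⟨w, hw⟩ | ⟨A, hA⟩
      · exact .inl ⟨w, hw.imp (Finset.mem_union_left _) (Finset.mem_union_left _)⟩
      · exact .inr ⟨A, Multiset.mem_add.2 (.inl hA)⟩
    · rcases ih' z hz with ⟨w, hw⟩ | ⟨A, hA⟩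
      · exact .inl ⟨w, hw.imp (Finset.mem_union_right _) (Finset.mem_union_right _)⟩
      · exact .inr ⟨A, Multiset.mem_add.2 (.inr hA)⟩
  | @nest d x y _ _ _ _ _ _ _ ih =>
    rintro z (rfl | rfl | hz)
    · cases d
      · exact .inl ⟨y, .inl (Finset.mem_insert_self _ _)⟩
      · exact .inl ⟨y, .inr (Finset.mem_insert_self _ _)⟩
    · cases d
      · exact .inl ⟨x, .inr (Finset.mem_insert_self _ _)⟩
      · exact .inl ⟨x, .inl (Finset.mem_insert_self _ _)⟩
    · rcases ih z hz with ⟨w, hw⟩ | ⟨A, hA⟩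
      · exact .inl ⟨w, hw.imp (Finset.mem_insert_of_mem) (Finset.mem_insert_of_mem)⟩
      · exact .inr ⟨A, hA⟩

/-! ### Exposing formulae and subtrees at the root -/

/-- A formula labeling the root stands at the top level. Removing it may remove the root from the
vertex set, whence `insert x V₀ = V`. -/
theorem NTree.split_formula (h : NTree x X V E Γ) {A : Formula} (hA : (x, A) ∈ Γ) :
    ∃ Z V₀ Γ₀, NTree x Z V₀ E Γ₀ ∧ insert x V₀ = V ∧ Γ = (x, A) ::ₘ Γ₀ ∧
      qmk X = qmk Z + qmk (.fml A) := by
  induction h with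
  | empty x => simp at hA
  | fml x B =>
    obtain rfl : A = B := by simpa using hA
    exact ⟨.empty, ∅, 0, .empty x, by simp, rfl, by rw [qmk_empty, zero_add]⟩
  | @comma x X Y V V' E E' Γ Γ' hX hY hd ih ih' =>
    rcases Multiset.mem_add.1 hA with hA | hA
    · obtain ⟨Z, V₀, Γ₀, hZ, rfl, rfl, e⟩ := ih hA
      refine ⟨Z.comma Y, _, _, hZ.comma hY fun z hz => hd z (.inr hz), ?_, ?_, ?_⟩
      · rw [Set.insert_union]
      · rw [Multiset.cons_add]
      · rw [qmk_comma, qmk_comma, e]; abel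
    · obtain ⟨Z, V₀, Γ₀, hZ, rfl, rfl, e⟩ := ih' hA
      refine ⟨X.comma Z, _, _, hX.comma hZ fun z hz hz' => hd z hz (.inr hz'), ?_, ?_, ?_⟩
      · rw [Set.union_insert]
      · rw [Multiset.add_cons]
      · rw [qmk_comma, qmk_comma, e]; abel
  | nest d h hx _ _ => exact absurd (h.mem_of_fml _ hA) hx

/-- A subtree attached to the root by an edge stands at the top level. -/
theorem NTree.split_edge (h : NTree x X V E Γ) (d : Dmd) {y : Label} (hE : relAtom d x y ∈ E) :
    ∃ Z W V₁ V₂ E₁ E₂ Γ₁ Γ₂, NTree x Z V₁ E₁ Γ₁ ∧ NTree y W V₂ E₂ Γ₂ ∧ x ∉ V₂ ∧ x ≠ y ∧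
      (∀ z ∈ V₁, z ∈ insert x (insert y V₂) → z = x) ∧ V = V₁ ∪ insert x (insert y V₂) ∧
      E = E₁ ∪ insert (relAtom d x y) E₂ ∧ Γ = Γ₁ + Γ₂ ∧
      qmk X = qmk Z + qmk (nestD d W) := by
  induction h with
  | empty x => simp at hE
  | fml x B => simp at hE
  | @comma x X Y V V' E E' Γ Γ' hX hY hd ih ih' =>
    rcases Finset.mem_union.1 hE with hE | hE
    · obtain ⟨Z, W, V₁, V₂, E₁, E₂, Γ₁, Γ₂, hZ, hW, h1, h2, h3, rfl, rfl, rfl, e⟩ := ih hE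
      refine ⟨Z.comma Y, W, _, V₂, _, E₂, _, Γ₂,
        hZ.comma hY fun z hz => hd z (.inl hz), hW, h1, h2, ?_, ?_, ?_, ?_, ?_⟩
      · rintro z (hz | hz) hz'
        · exact h3 z hz hz'
        · exact hd z (.inr hz') hz
      · rw [Set.union_right_comm]
      · rw [Finset.union_right_comm]
      · abel
      · rw [qmk_comma, qmk_comma, e]; abel
    · obtain ⟨Z, W, V₁, V₂, E₁, E₂, Γ₁, Γ₂, hZ, hW, h1, h2, h3, rfl, rfl, rfl, e⟩ := ih' hE
      refine ⟨X.comma Z, W, _, V₂, _, E₂, _, Γ₂,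
        hX.comma hZ fun z hz hz' => hd z hz (.inl hz'), hW, h1, h2, ?_, ?_, ?_, ?_, ?_⟩
      · rintro z (hz | hz) hz'
        · exact hd z hz (.inr hz')
        · exact h3 z hz hz'
      · rw [Set.union_assoc]
      · rw [Finset.union_assoc]
      · abel
      · rw [qmk_comma, qmk_comma, e]; abel
  | @nest d' x w X V E Γ h hx hxw _ =>
    rcases Finset.mem_insert.1 hE with he | he
    · obtain ⟨rfl, rfl⟩ : d = d' ∧ y = w := by
        cases d <;> cases d' <;> simp_all [relAtom]
      exact ⟨.empty, X, ∅, V, ∅, E, 0, Γ, .empty x, h, hx, hxw, by simp, by simp, by simp,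
        by simp, by rw [qmk_empty, zero_add]⟩
    · refine absurd (h.mem_of_edge _ he) ?_
      cases d <;> simp [relAtom, hx]

/-! ### Changing the root -/

theorem SKT.display {Ext : NSeq → NSeq → Prop} (d : Dmd) {X Y : NSeq}
    (h : SKT Ext (X.comma (nestD d.inv Y))) : SKT Ext ((nestD d X).comma Y) := by
  cases d
  · exact h.rp
  · exact h.rf

/-- Rerooting with a side sequent `Z` at the old root; the side sequent accumulates the part of the
polytree already left behind on the way to `u`. -/
theorem NTree.reroot_aux (h : NTree x X V E Γ) {u : Label} (hu : u ∈ V) :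
    ∀ {Z : NSeq} {V' : Set Label} {E' : RelSet} {Γ' : Multiset (Label × Formula)},
      NTree x Z V' E' Γ' → (∀ z ∈ V, z ∈ V' → z = x) →
      ∃ Y, NTree u Y (V ∪ V') (E ∪ E') (Γ + Γ') ∧
        (SKT NoNest Y → SKT NoNest (X.comma Z)) := by
  induction h with
  | empty x => simp at hu
  | fml x B =>
    intro Z V' E' Γ' hZ hd
    obtain rfl : u = x := hu
    exact ⟨_, (NTree.fml u B).comma hZ hd, id⟩
  | @comma x X₁ X₂ V₁ V₂ E₁ E₂ Γ₁ Γ₂ h₁ h₂ hd ih₁ ih₂ =>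
    intro Z V' E' Γ' hZ hd'
    rcases hu with hu | hu
    · obtain ⟨Y, hY, hS⟩ := ih₁ hu (h₂.comma hZ fun z hz => hd' z (.inr hz)) (by
        rintro z hz (hz' | hz')
        · exact hd z hz hz'
        · exact hd' z (.inl hz) hz')
      refine ⟨Y, hY.cast (Set.union_assoc ..).symm (Finset.union_assoc ..).symm
        (add_assoc ..).symm, fun s => (hS s).of_qmk ?_⟩
      simp only [qmk_comma]; abel
    · obtain ⟨Y, hY, hS⟩ := ih₂ hu (h₁.comma hZ fun z hz => hd' z (.inl hz)) (by
        rintro z hz (hz' | hz')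
        · exact hd z hz' hz
        · exact hd' z (.inr hz) hz')
      refine ⟨Y, hY.cast ?_ ?_ ?_, fun s => (hS s).of_qmk ?_⟩
      · rw [← Set.union_assoc, Set.union_comm V₂]
      · rw [← Finset.union_assoc, Finset.union_comm E₂]
      · abel
      · simp only [qmk_comma]; abel
  | @nest d x y X V E Γ h hx hxy ih =>
    intro Z V' E' Γ' hZ hd
    by_cases hux : u = x
    · subst hux
      exact ⟨_, (h.nest d hx hxy).comma hZ hd, id⟩
    have hyV' : y ∉ V' := fun hy => hxy (hd y (by simp) hy).symm
    have hZ' := hZ.nest d.inv hyV' hxy.symm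
    have hd' : ∀ z ∈ V, z ∈ insert y (insert x V') → z = y := by
      rintro z hz (rfl | rfl | hz')
      · rfl
      · exact absurd hz hx
      · obtain rfl := hd z (.inr (.inr hz)) hz'
        exact absurd hz hx
    have hatom : relAtom d.inv y x = relAtom d x y := by cases d <;> rfl
    have hEE : E ∪ insert (relAtom d.inv y x) E' = insert (relAtom d x y) E ∪ E' := by
      rw [hatom, Finset.union_insert, Finset.insert_union]
    have hVV : V ∪ insert y (insert x V') = insert x (insert y V) ∪ V' := by
      simp only [Set.union_insert, Set.insert_union]
      rw [Set.insert_comm]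
    rcases hu with hu | rfl | hu
    · exact absurd hu hux
    · exact ⟨_, (h.comma hZ' hd').cast hVV hEE rfl, SKT.display d⟩
    · obtain ⟨Y, hY, hS⟩ := ih hu hZ' hd'
      exact ⟨Y, hY.cast hVV hEE rfl, fun s => SKT.display d (hS s)⟩

theorem NTree.reroot (h : NTree x X V E Γ) {u : Label} (hu : u ∈ V) :
    ∃ Y, NTree u Y V E Γ ∧ (SKT NoNest Y → SKT NoNest X) := by
  obtain ⟨Y, hY, hS⟩ := h.reroot_aux hu (.empty x) (by simp)
  refine ⟨Y, hY.cast (by simp) (by simp) (by simp), fun s => (hS s).of_qmk ?_⟩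
  rw [qmk_comma, qmk_empty, add_zero]

/-! ### The rules of the labeled calculus -/

/-- Rerooting at a labeled formula and exposing it at the top level. -/
theorem NTree.focus {r u : Label} {A : Formula} (h : NTree r X V E ((u, A) ::ₘ Γ)) :
    ∃ Z V₀, NTree u Z V₀ E Γ ∧ insert u V₀ = V ∧
      (SKT NoNest (Z.comma (.fml A)) → SKT NoNest X) := by
  obtain ⟨Y, hY, hS⟩ := h.reroot (h.mem_of_fml _ (Multiset.mem_cons_self _ _))
  obtain ⟨Z, V₀, Γ₀, hZ, hV, hΓ, e⟩ := hY.split_formula (Multiset.mem_cons_self _ _)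
  obtain rfl := (Multiset.cons_inj_right _).1 hΓ
  exact ⟨Z, V₀, hZ, hV, fun s => hS (s.of_qmk (by rw [qmk_comma, e]))⟩

theorem NTree.add_fml (h : NTree x X V E Γ) (A : Formula) :
    NTree x (X.comma (.fml A)) (insert x V) E ((x, A) ::ₘ Γ) :=
  (h.comma (.fml x A) fun _ _ hz => hz).cast (by rw [Set.union_singleton])
    (by simp) (by rw [add_comm, Multiset.singleton_add])

/-- The rules (□) and (■). -/
theorem NTree.box_step (d : Dmd) {r u y : Label} {A : Formula}
    (hy : ¬ occursLS y (E, (u, boxD d A) ::ₘ Γ))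
    (ih : ∀ {r X V}, NTree r X V (insert (relAtom d u y) E) ((y, A) ::ₘ Γ) → SKT NoNest X)
    (h : NTree r X V E ((u, boxD d A) ::ₘ Γ)) : SKT NoNest X := by
  have hyV : y ∉ V := fun hyV => hy (h.occurs y hyV)
  obtain ⟨Z, V₀, hZ, rfl, hS⟩ := h.focus
  have huy : u ≠ y := by rintro rfl; exact hyV (.inl rfl)
  have hW := (NTree.fml y A).nest d (x := u) (by simpa using huy) huy
  have s := ih <| (hZ.comma hW (by
    rintro z hz (rfl | rfl | rfl)
    · rfl
    · exact absurd (.inr hz) hyV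
    · exact absurd (.inr hz) hyV)).cast rfl (by simp)
      (by rw [add_comm, Multiset.singleton_add])
  apply hS
  cases d
  · exact s.box
  · exact s.bbox

/-- The rules (◇) and (◆). -/
theorem NTree.dia_step (d : Dmd) {r u y : Label} {A : Formula} (hE : relAtom d u y ∈ E)
    (ih : ∀ {r X V}, NTree r X V E ((y, A) ::ₘ (u, dmdF d A) ::ₘ Γ) → SKT NoNest X)
    (h : NTree r X V E ((u, dmdF d A) ::ₘ Γ)) : SKT NoNest X := by
  obtain ⟨Y, hY, hS⟩ := h.reroot (h.mem_of_fml _ (Multiset.mem_cons_self _ _))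
  obtain ⟨Z, W, V₁, V₂, E₁, E₂, Γ₁, Γ₂, hZ, hW, h1, h2, h3, -, rfl, hΓ, e⟩ :=
    hY.split_edge d hE
  -- The principal formula is not in the subtree beyond the edge, since `u` is not a vertex there.
  have hmem : (u, dmdF d A) ∈ Γ₁ := by
    have : (u, dmdF d A) ∈ Γ₁ + Γ₂ := hΓ ▸ Multiset.mem_cons_self _ _
    exact (Multiset.mem_add.1 this).resolve_right fun hm => h1 (hW.mem_of_fml _ hm)
  obtain ⟨Z', -, -, -, -, -, e'⟩ := hZ.split_formula hmem
  have hWA := (hW.add_fml A).nest d (x := u) (by simp [h1, h2]) h2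
  have s := ih <| (hZ.comma hWA (by
    intro z hz hz'
    exact h3 z hz (by simpa using hz'))).cast rfl rfl (by rw [hΓ, Multiset.add_cons])
  have s' : SKT NoNest ((Z'.comma (nestD d (W.comma (.fml A)))).comma (.fml (dmdF d A))) :=
    s.of_qmk (by simp only [qmk_comma, e']; abel)
  have s'' : SKT NoNest ((Z'.comma (nestD d W)).comma (.fml (dmdF d A))) := by
    cases d
    · exact s'.dia
    · exact s'.bdia
  exact hS (s''.of_qmk (by simp only [qmk_comma, e, e']; abel))

theorem G3KtD.skt (D : G3KtD NoExt E Γ) :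
    ∀ {r : Label} {X : NSeq} {V : Set Label}, NTree r X V E Γ → SKT NoNest X := by
  induction D with
  | id R Γ x p =>
    intro r X V h
    obtain ⟨Z, V₀, hZ, -, hS⟩ := h.focus
    obtain ⟨Z', -, -, -, -, -, e⟩ := hZ.split_formula (Multiset.mem_cons_self _ _)
    exact hS ((SKT.id Z' p).of_qmk (by simp only [qmk_comma, e]; abel))
  | orR R Γ x A B D ih =>
    intro r X V h
    obtain ⟨Z, V₀, hZ, -, hS⟩ := h.focus
    refine hS (SKT.orR ((ih ((hZ.add_fml B).add_fml A)).of_qmk ?_))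
    simp only [qmk_comma]; abel
  | andR R Γ x A B D₁ D₂ ih₁ ih₂ =>
    intro r X V h
    obtain ⟨Z, V₀, hZ, -, hS⟩ := h.focus
    exact hS (SKT.andR (ih₁ (hZ.add_fml A)) (ih₂ (hZ.add_fml B)))
  | boxR R Γ x y A hy D ih => exact fun h => NTree.box_step .wd hy ih h
  | diaR R Γ x y A hE D ih => exact fun h => NTree.dia_step .wd hE ih h
  | bboxR R Γ x y A hy D ih => exact fun h => NTree.box_step .bd hy ih h
  | bdiaR R Γ x y A hE D ih => exact fun h => NTree.dia_step .bd hE ih h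
  | ext _ _ _ _ h => exact h.elim

end

/-- if a labeled polytree sequent `R, Γ` is derivable in
    `G3Kt` then the nested sequent `𝔑(R, Γ)` is derivable in the shallow nested
    calculus `SKT`. -/
theorem g3kt_to_skt (R : RelSet) (Γ : Multiset (Label × Formula))
    (hpoly : IsPolytreeSeq R Γ) (hd : G3KtDeriv NoExt R Γ)
    (x : Label) (X : NSeq) (hX : NTrans x (toLGraph R Γ) X) :
    SKT NoNest X := by
  obtain ⟨D⟩ := hd
  obtain ⟨Γ', hT, hL⟩ := LabT.tree hX
  obtain rfl : Γ = Γ' := labelsAt_injective hL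
  exact D.skt hT
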